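/- Fix n ≥ 2, m ≥ n, and q ≥ 1. Let Z be the S2S core tensor for arity n with m segments of size q having a single nonzero block: Z_{j_0, j_1, ..., j_n} = I_1^n when (j_0, j_1, j_2, ..., j_n) = (1, 1, 2, ..., n), and Z_{j_0,...,j_n} = I_0^n otherwise. Then for all vectors r, e_1, ..., e_n ∈ ℝ^{mq}, the S2S score satisfies f_z(r, e_1, ..., e_n; Z) = ⟨r^{(1)}, e_1^{(1)}, e_2^{(2)}, ..., e_n^{(n)}⟩; that is, under this sparse core tensor the i-th segment of the shared entity embedding acts as a position-specific embedding for argument position i. -/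

import Mathlib

open Finset

/-- The `j`-th segment (of length `q`) of a vector in `ℝ^(M·q)`:
coordinates `(j-1)q+1` through `jq` (1-based), i.e. `j·q, …, j·q + q - 1` (0-based). -/
def seg (M q : ℕ) (v : Fin (M * q) → ℝ) (j : Fin M) : Fin q → ℝ :=
  fun k => v (finProdFinEquiv (j, k))

/-- Multilinear inner product of `n+1` vectors in `ℝ^q`. -/
def mip (n q : ℕ) (v : Fin (n + 1) → Fin q → ℝ) : ℝ :=
  ∑ k : Fin q, ∏ i : Fin (n + 1), v i k

/-- The `(n+1)`-order superdiagonal tensor `I_v^n` of size `q` in each mode: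
`v` when all indices coincide, `0` elsewhere. -/
def diagT (n q : ℕ) (v : ℝ) : (Fin (n + 1) → Fin q) → ℝ :=
  fun k => if ∀ i, k i = k 0 then v else 0

/-- Tucker product of an `(n+1)`-order tensor of size `q` in each mode with
vectors `u 0, …, u n ∈ ℝ^q`. -/
def tucker (n q : ℕ) (G : (Fin (n + 1) → Fin q) → ℝ)
    (u : Fin (n + 1) → Fin q → ℝ) : ℝ :=
  ∑ k : Fin (n + 1) → Fin q, G k * ∏ i : Fin (n + 1), u i (k i)

/-- S2S score of vectors `vs 0 = r, vs 1 = e_1, …, vs n = e_n ∈ ℝ^(m·q)` with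
an S2S core tensor `Z` for arity `n` with `m` segments of size `q`. -/
def s2sScore (n m q : ℕ)
    (Z : (Fin (n + 1) → Fin m) → (Fin (n + 1) → Fin q) → ℝ)
    (vs : Fin (n + 1) → Fin (m * q) → ℝ) : ℝ :=
  ∑ j : Fin (n + 1) → Fin m, tucker n q (Z j) (fun i => seg m q (vs i) (j i))

/-- S2S score computed on the first `m` segments of vectors in `ℝ^(M·q)` (`m ≤ M`). -/
def s2sScoreFirst (n m M q : ℕ) (h : m ≤ M)
    (Z : (Fin (n + 1) → Fin m) → (Fin (n + 1) → Fin q) → ℝ)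
    (vs : Fin (n + 1) → Fin (M * q) → ℝ) : ℝ :=
  ∑ j : Fin (n + 1) → Fin m,
    tucker n q (Z j) (fun i => seg M q (vs i) (Fin.castLE h (j i)))

/-- A sparse core tensor: every block lies in `{-I_1^n, I_0^n, I_1^n}`. -/
def SparseCore (n m q : ℕ)
    (Z : (Fin (n + 1) → Fin m) → (Fin (n + 1) → Fin q) → ℝ) : Prop :=
  ∀ j, Z j = diagT n q (-1) ∨ Z j = diagT n q 0 ∨ Z j = diagT n q 1

theorem tucker_diagT_one (n q : ℕ) (u : Fin (n + 1) → Fin q → ℝ) :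
    tucker n q (diagT n q 1) u = mip n q u := by
  unfold tucker mip diagT
  simp only [ite_mul, one_mul, zero_mul]
  rw [← Finset.sum_filter]
  symm
  refine Finset.sum_bij (fun k _ => fun _ => k) ?_ ?_ ?_ ?_
  · intro k _
    simp
  · intro a _ b _ h
    exact congrFun h 0
  · intro b hb
    refine ⟨b 0, Finset.mem_univ _, ?_⟩
    funext i
    exact ((Finset.mem_filter.mp hb).2 i).symm
  · intro k _
    rfl

theorem tucker_diagT_zero (n q : ℕ) (u : Fin (n + 1) → Fin q → ℝ) :
    tucker n q (diagT n q 0) u = 0 := by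
  simp [tucker, diagT]

/-- the S2S core tensor whose single nonzero block is `I_1^n` at block index
`(1, 1, 2, …, n)` (1-based; `(0, 0, 1, …, n-1)` 0-based) computes the multilinear inner
product `⟨r^(1), e_1^(1), e_2^(2), …, e_n^(n)⟩`: the `i`-th segment of the shared entity
embedding acts as a position-specific embedding for argument position `i`. -/
theorem s2s_position_specific (n m q : ℕ) (hn : 2 ≤ n) (hm : n ≤ m) (hq : 1 ≤ q)
    (Z : (Fin (n + 1) → Fin m) → (Fin (n + 1) → Fin q) → ℝ)
    (hZ : ∀ j, Z j =
      if j = Fin.cases (⟨0, by omega⟩ : Fin m) (fun i : Fin n => Fin.castLE hm i)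
      then diagT n q 1 else diagT n q 0)
    (vs : Fin (n + 1) → Fin (m * q) → ℝ) :
    s2sScore n m q Z vs
      = mip n q (Fin.cases (seg m q (vs 0) (⟨0, by omega⟩ : Fin m))
          (fun i : Fin n => seg m q (vs i.succ) (Fin.castLE hm i))) := by
  unfold s2sScore
  rw [Finset.sum_eq_single
    (Fin.cases (⟨0, by omega⟩ : Fin m) (fun i : Fin n => Fin.castLE hm i))]
  · rw [hZ, if_pos rfl, tucker_diagT_one]
    congr 1
    funext i
    refine Fin.cases ?_ (fun i => ?_) i <;> rfl
  · intro j _ hj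
    rw [hZ, if_neg hj, tucker_diagT_zero]
  · intro h
    exact absurd (Finset.mem_univ _) h
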